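/- Let f : B → A be a homomorphism of commutative rings, and assume f is pure as a morphism of B-modules. Then for every comodule (M, ρ) over the canonical coring A ⊗_B A, the counit map ζ_M : M^co ⊗_B A → M, ζ_M(m ⊗ a) = m·a, is bijective. -/

import Mathlib

open TensorProduct

universe u

noncomputable def unitMap (B A : Type u) [CommRing B] [CommRing A] [Algebra B A]
    (N : Type u) [AddCommGroup N] [Module B N] : N →ₗ[B] N ⊗[B] A :=
  (TensorProduct.mk B N A).flip 1

/-- The action map `M ⊗_B A → M`, `m ⊗ a ↦ m · a`. -/
noncomputable def actionMap (B A : Type u) [CommRing B] [CommRing A] [Algebra B A]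
    (M : Type u) [AddCommGroup M] [Module B M] [Module A M] [IsScalarTower B A M] :
    M ⊗[B] A →ₗ[B] M :=
  TensorProduct.lift (LinearMap.mk₂ B (fun m a => a • m)
    (fun m m' a => smul_add a m m')
    (fun b m a => smul_comm a b m)
    (fun m a a' => add_smul a a' m)
    (fun b m a => smul_assoc b a m))

/-- `(M, ρ)` is a comodule over the canonical coring `A ⊗_B A`. -/
def IsCanComodule (B A : Type u) [CommRing B] [CommRing A] [Algebra B A]
    (M : Type u) [AddCommGroup M] [Module B M] [Module A M] [IsScalarTower B A M]
    (ρ : M →ₗ[B] M ⊗[B] A) : Prop :=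
  (∀ (a : A) (m : M),
      ρ (a • m) = LinearMap.lTensor M (LinearMap.mulLeft B a) (ρ m)) ∧
  (∀ m : M, LinearMap.rTensor A ρ (ρ m) = LinearMap.rTensor A (unitMap B A M) (ρ m)) ∧
  (∀ m : M, actionMap B A M (ρ m) = m)

/-- The coinvariants `M^co = {m : ρ m = m ⊗ 1}` as a `B`-submodule. -/
noncomputable def coinv (B A : Type u) [CommRing B] [CommRing A] [Algebra B A]
    (M : Type u) [AddCommGroup M] [Module B M] [Module A M] [IsScalarTower B A M]
    (ρ : M →ₗ[B] M ⊗[B] A) : Submodule B M where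
  carrier := {m | ρ m = m ⊗ₜ[B] 1}
  add_mem' := by
    intro x y hx hy
    simp only [Set.mem_setOf_eq] at *
    rw [map_add, hx, hy, add_tmul]
  zero_mem' := by simp
  smul_mem' := by
    intro b m hm
    simp only [Set.mem_setOf_eq] at *
    rw [map_smul, hm, smul_tmul']

/-- The counit map `ζ_M : M^co ⊗_B A → M`, `m ⊗ a ↦ m · a`. -/
noncomputable def counitMap (B A : Type u) [CommRing B] [CommRing A] [Algebra B A]
    (M : Type u) [AddCommGroup M] [Module B M] [Module A M] [IsScalarTower B A M]
    (ρ : M →ₗ[B] M ⊗[B] A) : (coinv B A M ρ) ⊗[B] A →ₗ[B] M :=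
  actionMap B A M ∘ₗ LinearMap.rTensor A (coinv B A M ρ).subtype

namespace PureDescent

open CharacterModule

section General

variable {B : Type u} [CommRing B] {C M Q P : Type u} [AddCommGroup C] [AddCommGroup M]
  [AddCommGroup Q] [AddCommGroup P] [Module B C] [Module B M] [Module B Q] [Module B P]

/-- A character killing the kernel of `d` factors through `d`. -/
lemma exists_dual_eq (d : M →ₗ[B] Q) (χ : CharacterModule M) (h : ∀ m, d m = 0 → χ m = 0) :
    ∃ ω : CharacterModule Q, dual d ω = χ := by
  have hinj : Function.Injective ((LinearMap.ker d).liftQ d le_rfl) := by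
    rw [← LinearMap.ker_eq_bot, Submodule.ker_liftQ_eq_bot _ _ _ le_rfl]
  let χ' : CharacterModule (M ⧸ LinearMap.ker d) :=
    QuotientAddGroup.lift (LinearMap.ker d).toAddSubgroup (χ : M →+ AddCircle (1 : ℚ))
      (fun m hm => h m hm)
  obtain ⟨ω, hω⟩ := dual_surjective_of_injective _ hinj χ'
  refine ⟨ω, ?_⟩
  ext m
  exact DFunLike.congr_fun hω (Submodule.Quotient.mk m)

lemma char_ext_tmul {X Y : Type u} [AddCommGroup X] [AddCommGroup Y] [Module B X] [Module B Y]
    (c c' : CharacterModule (X ⊗[B] Y)) (h : ∀ x y, c (x ⊗ₜ y) = c' (x ⊗ₜ y)) : c = c' := by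
  ext z
  induction z with
  | zero => rw [map_zero, map_zero]
  | tmul x y => exact h x y
  | add a b ha hb => rw [map_add, map_add, ha, hb]

lemma pure_exact (i : C →ₗ[B] M) (d : M →ₗ[B] Q) (hi : Function.Injective i)
    (hdi : ∀ c, d (i c) = 0) (hex : ∀ m, d m = 0 → ∃ c, i c = m)
    (S : CharacterModule M →ₗ[B] CharacterModule Q)
    (hS : ∀ ω, dual d (S (dual d ω)) = dual d ω) :
    Function.Injective (i.lTensor P) ∧
      ∀ y : P ⊗[B] M, d.lTensor P y = 0 → ∃ x, i.lTensor P x = y := by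
  have key : ∀ χ : CharacterModule M, dual i χ = 0 → dual d (S χ) = χ := by
    intro χ hχ
    obtain ⟨ω, rfl⟩ := exists_dual_eq d χ (fun m hm => by
      obtain ⟨c, rfl⟩ := hex m hm
      exact DFunLike.congr_fun hχ c)
    exact hS ω
  have hid : ∀ ω, dual i (dual d ω) = 0 := by
    intro ω
    ext c
    change ω (d (i c)) = 0
    rw [hdi, map_zero]
  constructor
  · obtain ⟨σ, hσ⟩ := (dual_surjective_of_injective i hi).hasRightInverse
    let e : CharacterModule M →ₗ[B] CharacterModule M := LinearMap.id - dual d ∘ₗ S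
    have he : ∀ x y, dual i x = dual i y → e x = e y := by
      intro x y hxy
      have := key (x - y) (by rw [map_sub, hxy, sub_self])
      rw [← sub_eq_zero, ← map_sub]
      change (x - y) - dual d (S (x - y)) = 0
      rw [this, sub_self]
    have hie : ∀ x, dual i (e x) = dual i x := by
      intro x
      change dual i (x - dual d (S x)) = _
      rw [map_sub, hid, sub_zero]
    let t : CharacterModule C →ₗ[B] CharacterModule M :=
      { toFun := fun χ => e (σ χ)
        map_add' := fun x y => by
          rw [← map_add]
          exact he _ _ (by rw [map_add, hσ, hσ, hσ])
        map_smul' := fun b x => by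
          rw [RingHom.id_apply, ← map_smul]
          exact he _ _ (by rw [map_smul, hσ, hσ]) }
    have ht : ∀ χ, dual i (t χ) = χ := fun χ => (hie _).trans (hσ χ)
    rw [← dual_surjective_iff_injective (R := B)]
    intro c
    refine ⟨uncurry (t ∘ₗ curry c), char_ext_tmul _ _ fun p x => ?_⟩
    exact DFunLike.congr_fun (ht (curry c p)) x
  · intro y hy
    by_contra hne
    have hq : (Submodule.Quotient.mk y : (P ⊗[B] M) ⧸ LinearMap.range (i.lTensor P)) ≠ 0 := by
      rw [Ne, Submodule.Quotient.mk_eq_zero]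
      exact hne
    obtain ⟨c, hc⟩ := exists_character_apply_ne_zero_of_ne_zero hq
    let ψ : CharacterModule (P ⊗[B] M) := dual (Submodule.mkQ (LinearMap.range (i.lTensor P))) c
    have h1 : ψ = dual (d.lTensor P) (uncurry (S ∘ₗ curry ψ)) := by
      refine char_ext_tmul _ _ fun p m => ?_
      refine (DFunLike.congr_fun (key (curry ψ p) ?_) m).symm
      ext x
      change c (Submodule.Quotient.mk (i.lTensor P (p ⊗ₜ x))) = 0
      rw [(Submodule.Quotient.mk_eq_zero _).2 (LinearMap.mem_range_self _ _), map_zero]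
    apply hc
    change ψ y = 0
    rw [h1]
    change (uncurry (S ∘ₗ curry ψ)) (d.lTensor P y) = 0
    rw [hy, map_zero]

end General

section Splitting

variable {B A : Type u} [CommRing B] [CommRing A] [Algebra B A]

/-- `N^+ → Hom(N, B^+)`. -/
noncomputable def tilde (N : Type u) [AddCommGroup N] [Module B N] :
    CharacterModule N →ₗ[B] (N →ₗ[B] CharacterModule B) :=
  curry ∘ₗ dual (TensorProduct.rid B N).toLinearMap

lemma tilde_apply (N : Type u) [AddCommGroup N] [Module B N] (ψ : CharacterModule N) (n : N)
    (b : B) : tilde N ψ n b = ψ (b • n) := by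
  change ψ (TensorProduct.rid B N (n ⊗ₜ b)) = _
  rw [TensorProduct.rid_tmul]

/-- The natural splitting `N^+ → (N ⊗ A)^+` given by a character of `B^+ ⊗ A`. -/
noncomputable def spl (E : CharacterModule (CharacterModule B ⊗[B] A))
    (N : Type u) [AddCommGroup N] [Module B N] :
    CharacterModule N →ₗ[B] CharacterModule (N ⊗[B] A) :=
  uncurry ∘ₗ LinearMap.llcomp B N (CharacterModule B) (CharacterModule A) (curry E) ∘ₗ tilde N

lemma spl_tmul (E : CharacterModule (CharacterModule B ⊗[B] A))
    (N : Type u) [AddCommGroup N] [Module B N] (ψ : CharacterModule N) (n : N) (a : A) :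
    spl E N ψ (n ⊗ₜ a) = E (tilde N ψ n ⊗ₜ a) := rfl

lemma spl_nat (E : CharacterModule (CharacterModule B ⊗[B] A))
    {N N' : Type u} [AddCommGroup N] [Module B N] [AddCommGroup N'] [Module B N']
    (g : N →ₗ[B] N') (ψ : CharacterModule N') :
    spl E N (dual g ψ) = dual (g.rTensor A) (spl E N' ψ) := by
  refine char_ext_tmul _ _ fun n a => ?_
  change _ = spl E N' ψ (g n ⊗ₜ a)
  rw [spl_tmul, spl_tmul]
  congr 2
  ext b
  rw [tilde_apply, tilde_apply, ← map_smul]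
  rfl

end Splitting

end PureDescent

open CharacterModule PureDescent in
/-- If `f : B → A` is pure as a morphism of `B`-modules, then for every comodule `(M, ρ)`
over the canonical coring `A ⊗_B A` the counit map `ζ_M : M^co ⊗_B A → M` is bijective. -/
theorem counit_bijective_of_pure
    (B A : Type u) [CommRing B] [CommRing A] [Algebra B A]
    (hpure : ∀ (N : Type u) [AddCommGroup N] [Module B N],
      Function.Injective (unitMap B A N))
    (M : Type u) [AddCommGroup M] [Module B M] [Module A M] [IsScalarTower B A M]
    (ρ : M →ₗ[B] M ⊗[B] A) (hρ : IsCanComodule B A M ρ) :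
    Function.Bijective (counitMap B A M ρ) := by
  obtain ⟨hlin, hcoassoc, hcounit⟩ := hρ
  -- the evaluation character at `1`, extended along the pure map
  let ev : CharacterModule (CharacterModule B) :=
    (AddMonoidHom.eval (1 : B) : (B →+ AddCircle (1 : ℚ)) →+ AddCircle (1 : ℚ))
  obtain ⟨E, hE⟩ := dual_surjective_of_injective _ (hpure (CharacterModule B)) ev
  have hE1 : ∀ χ : CharacterModule B, E (χ ⊗ₜ 1) = χ 1 := fun χ => DFunLike.congr_fun hE χ
  let u := unitMap B A M
  let S := spl E M
  have hu : ∀ ψ, dual u (S ψ) = ψ := by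
    intro ψ
    ext m
    change spl E M ψ (m ⊗ₜ 1) = _
    rw [spl_tmul, hE1, tilde_apply, one_smul]
  have hco : ∀ ω, dual ρ (S (dual ρ ω)) = dual ρ (S (dual u ω)) := by
    intro ω
    ext m
    change (spl E M (dual ρ ω)) (ρ m) = (spl E M (dual u ω)) (ρ m)
    rw [spl_nat, spl_nat]
    change spl E _ ω (ρ.rTensor A (ρ m)) = spl E _ ω (u.rTensor A (ρ m))
    rw [hcoassoc]
  let d := u - ρ
  have hd : ∀ ω, dual d ω = dual u ω - dual ρ ω := by
    intro ω
    ext m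
    exact map_sub ω (u m) (ρ m)
  have hS : ∀ ω, dual d (S (dual d ω)) = dual d ω := by
    intro ω
    rw [hd (S _), hu, hd ω, map_sub S, map_sub (dual ρ), hco, sub_self, sub_zero]
  obtain ⟨hinj, hex⟩ := pure_exact (P := A) (coinv B A M ρ).subtype d
    (Submodule.injective_subtype _)
    (fun c => sub_eq_zero.2 (Eq.symm c.2))
    (fun m hm => ⟨⟨m, (sub_eq_zero.1 hm).symm⟩, rfl⟩) S hS
  have hinj' : Function.Injective ((coinv B A M ρ).subtype.rTensor A) :=
    LinearMap.lTensor_inj_iff_rTensor_inj _ _ |>.1 hinj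
  have hex' : ∀ y : M ⊗[B] A, d.rTensor A y = 0 →
      ∃ x, (coinv B A M ρ).subtype.rTensor A x = y := by
    intro y hy
    have hlc : d.lTensor A (TensorProduct.comm B M A y)
        = TensorProduct.comm B _ A (d.rTensor A y) :=
      DFunLike.congr_fun (show d.lTensor A ∘ₗ (TensorProduct.comm B M A).toLinearMap
        = (TensorProduct.comm B _ A).toLinearMap ∘ₗ d.rTensor A from
          TensorProduct.ext' fun _ _ => rfl) y
    have hrc : ∀ x, (coinv B A M ρ).subtype.rTensor A (TensorProduct.comm B A _ x)
        = TensorProduct.comm B A M ((coinv B A M ρ).subtype.lTensor A x) := fun x =>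
      DFunLike.congr_fun (show (coinv B A M ρ).subtype.rTensor A ∘ₗ
          (TensorProduct.comm B A _).toLinearMap
        = (TensorProduct.comm B A M).toLinearMap ∘ₗ (coinv B A M ρ).subtype.lTensor A from
          TensorProduct.ext' fun _ _ => rfl) x
    obtain ⟨x, hx⟩ := hex (TensorProduct.comm B M A y) (by
      rw [hlc, hy, map_zero])
    refine ⟨TensorProduct.comm B A _ x, ?_⟩
    rw [hrc, hx]
    simp
  have hρζ : ∀ x, ρ (counitMap B A M ρ x) = (coinv B A M ρ).subtype.rTensor A x := by
    intro x
    induction x with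
    | zero => simp
    | add a b ha hb => simp only [map_add, ha, hb]
    | tmul c a =>
      change ρ (a • (c : M)) = (c : M) ⊗ₜ a
      have hc : ρ (c : M) = (c : M) ⊗ₜ[B] 1 := c.2
      rw [hlin, hc, LinearMap.lTensor_tmul, LinearMap.mulLeft_apply, mul_one]
  constructor
  · intro x y hxy
    apply hinj'
    rw [← hρζ, ← hρζ, hxy]
  · intro m
    obtain ⟨x, hx⟩ := hex' (ρ m) (by
      change (u - ρ).rTensor A (ρ m) = 0
      rw [LinearMap.rTensor_sub, LinearMap.sub_apply, hcoassoc, sub_self])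
    refine ⟨x, ?_⟩
    rw [← hcounit (counitMap B A M ρ x), hρζ, hx, hcounit]
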